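/- Let ℋ ∈ Λ_d((k_1,…,k_n)) and let H_1, H_2 be two parallel hyperplanes in ℝ^d, both parallel to the n-th parallel group of ℋ, such that ℋ ∪ {H_1, H_2} ∈ Λ_d((k_1,…,k_n + 2)). Then the arrangements ℋ ∪ {H_1} and ℋ ∪ {H_2} have the same number of regions. -/

import Mathlib

noncomputable section

/-- `S` is (the carrier of) an affine subspace of dimension `m` in `ℝ^d`. -/
def IsAffineOfDim (d m : ℕ) (S : Set (EuclideanSpace ℝ (Fin d))) : Prop :=
  ∃ A : AffineSubspace ℝ (EuclideanSpace ℝ (Fin d)),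
    (A : Set (EuclideanSpace ℝ (Fin d))) = S ∧ S.Nonempty ∧ Module.finrank ℝ A.direction = m

/-- A family of hyperplanes `H i ⊆ ℝ^d`, grouped by `g : ι → Fin n` into `n` groups of
prescribed sizes `k l`, is in *general position modulo parallel hyperplanes*:
within each group the hyperplanes are parallel and pairwise distinct, and any selection of
hyperplanes from pairwise distinct groups is in general position. -/
def IsGPPH {ι : Type} [Fintype ι] (d n : ℕ) (g : ι → Fin n) (k : Fin n → ℕ)
    (H : ι → Set (EuclideanSpace ℝ (Fin d))) : Prop :=
  (∀ l : Fin n, (Finset.univ.filter fun i => g i = l).card = k l) ∧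
  (∀ l : Fin n, ∃ w : EuclideanSpace ℝ (Fin d), w ≠ 0 ∧
    ∀ i, g i = l → ∃ c : ℝ, H i = {x | (∑ t, w t * x t) = c}) ∧
  (∀ i i' : ι, i ≠ i' → g i = g i' → H i ≠ H i') ∧
  (∀ S : Finset ι, Set.InjOn g S →
    (S.card ≤ d → IsAffineOfDim d (d - S.card) (⋂ i ∈ S, H i)) ∧
    (d < S.card → (⋂ i ∈ S, H i) = ∅))

/-- The regions of an arrangement whose union is `A`: the connected components of `Aᶜ`. -/
def regionsOf {d : ℕ} (A : Set (EuclideanSpace ℝ (Fin d))) :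
    Set (Set (EuclideanSpace ℝ (Fin d))) :=
  {C | ∃ x ∈ Aᶜ, C = connectedComponentIn Aᶜ x}

/-- The number of regions of an arrangement whose union is `A`. -/
def numRegions {d : ℕ} (A : Set (EuclideanSpace ℝ (Fin d))) : ℕ :=
  (regionsOf A).ncard

/-!
Call a finite family of hyperplanes transverse if no nonempty intersection of some of them lies in
another one. Adding a hyperplane `H` to a transverse family cuts in two exactly those regions which
`H` meets, and these correspond to the regions of the family induced on `H`. Subsets with nonempty
intersection obey the same deletion–restriction recursion, so a transverse family has as many
regions as it has such subsets. A gp/ph family is transverse, and its subsets with nonempty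
intersection are those with at most `d` elements, no two in the same group; so the number of
regions depends only on the grouping, which is the same for `ℋ ∪ {G₁}` and `ℋ ∪ {G₂}`.
-/

open Finset
open scoped Topology

lemma card_filter_powerset_insert {ι : Type*} [DecidableEq ι] {I : Finset ι} {j : ι}
    (hj : j ∉ I) (p : Finset ι → Prop) [DecidablePred p] :
    #{S ∈ (insert j I).powerset | p S} =
      #{S ∈ I.powerset | p S} + #{S ∈ I.powerset | p (insert j S)} := by
  simp only [card_filter, sum_powerset_insert hj]

/-- A family of sets (in practice, hyperplanes) is *transverse* if no nonempty intersection of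
finitely many members is contained in a further member. -/
def IsTransverse {E ι : Type*} (H : ι → Set E) : Prop :=
  ∀ (S : Finset ι) (j : ι), j ∉ S → (⋂ i ∈ S, H i).Nonempty → ¬ (⋂ i ∈ S, H i) ⊆ H j

section SignCell

variable {E ι : Type*} [AddCommGroup E] [Module ℝ E]

/-- The points at which the affine functionals `f i` vanish for `i ∈ Z`, are positive for `i ∈ P`
and negative for `i ∈ N`: a face of the arrangement of the hyperplanes `f i = 0`, given by a sign
vector. Indices outside `Z ∪ P ∪ N` are unconstrained. -/
def signCell (f : ι → E →ᵃ[ℝ] ℝ) (Z P N : Finset ι) : Set E :=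
  {x | (∀ i ∈ Z, f i x = 0) ∧ (∀ i ∈ P, 0 < f i x) ∧ ∀ i ∈ N, f i x < 0}

variable {f : ι → E →ᵃ[ℝ] ℝ} {Z P N : Finset ι} {j : ι} {x y : E}

lemma signCell_empty_empty (f : ι → E →ᵃ[ℝ] ℝ) (Z : Finset ι) :
    signCell f Z ∅ ∅ = ⋂ i ∈ Z, f i ⁻¹' {0} := by
  ext x
  simp [signCell]

lemma convex_signCell (f : ι → E →ᵃ[ℝ] ℝ) (Z P N : Finset ι) : Convex ℝ (signCell f Z P N) := by
  have eq_iInter : signCell f Z P N =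
      (⋂ i ∈ Z, f i ⁻¹' {0}) ∩ ((⋂ i ∈ P, f i ⁻¹' Set.Ioi 0) ∩ ⋂ i ∈ N, f i ⁻¹' Set.Iio 0) := by
    ext x
    simp [signCell]
  rw [eq_iInter]
  exact (convex_iInter₂ fun i _ => (convex_singleton 0).affine_preimage (f i)).inter <|
    (convex_iInter₂ fun i _ => (convex_Ioi 0).affine_preimage (f i)).inter <|
    convex_iInter₂ fun i _ => (convex_Iio 0).affine_preimage (f i)

lemma eventually_lineMap_mem_signCell (hx : x ∈ signCell f Z P N)
    (hy : ∀ i ∈ Z, f i y = 0) :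
    ∀ᶠ t : ℝ in 𝓝 0, AffineMap.lineMap x y t ∈ signCell f Z P N := by
  have tendsto (i : ι) :
      Filter.Tendsto (fun t : ℝ => f i (AffineMap.lineMap x y t)) (𝓝 0) (𝓝 (f i x)) := by
    have hcont : Continuous fun t : ℝ => AffineMap.lineMap (f i x) (f i y) t :=
      AffineMap.lineMap_continuous
    simpa only [AffineMap.apply_lineMap, AffineMap.lineMap_apply_zero] using hcont.tendsto 0
  obtain ⟨hZ, hP, hN⟩ := hx
  have hpos := (Filter.eventually_all_finset P).2
    fun i hi => (tendsto i).eventually_const_lt (hP i hi)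
  have hneg := (Filter.eventually_all_finset N).2
    fun i hi => (tendsto i).eventually_lt_const (hN i hi)
  filter_upwards [hpos, hneg] with t hpos hneg
  refine ⟨fun i hi => ?_, hpos, hneg⟩
  simp [AffineMap.apply_lineMap, hZ i hi, hy i hi]

variable [DecidableEq ι]

lemma mem_signCell_insert_zero :
    x ∈ signCell f (insert j Z) P N ↔ f j x = 0 ∧ x ∈ signCell f Z P N := by
  simp [signCell, and_assoc]

lemma mem_signCell_insert_pos :
    x ∈ signCell f Z (insert j P) N ↔ 0 < f j x ∧ x ∈ signCell f Z P N := by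
  simp [signCell, and_assoc, and_left_comm]

lemma mem_signCell_insert_neg :
    x ∈ signCell f Z P (insert j N) ↔ f j x < 0 ∧ x ∈ signCell f Z P N := by
  simp [signCell, and_left_comm]

lemma signCell_insert_pos_neg_nonempty (hx : x ∈ signCell f (insert j Z) P N)
    (hy : ∀ i ∈ Z, f i y = 0) (hyj : f j y ≠ 0) :
    (signCell f Z (insert j P) N).Nonempty ∧ (signCell f Z P (insert j N)).Nonempty := by
  rw [mem_signCell_insert_zero] at hx
  have hnear := eventually_lineMap_mem_signCell hx.2 hy
  obtain ⟨s, hs, hs0⟩ := ((hnear.filter_mono nhdsWithin_le_nhds).and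
    (self_mem_nhdsWithin (s := Set.Iio (0 : ℝ)))).exists
  obtain ⟨t, ht, ht0⟩ := ((hnear.filter_mono nhdsWithin_le_nhds).and
    (self_mem_nhdsWithin (s := Set.Ioi (0 : ℝ)))).exists
  have apply_j (r : ℝ) : f j (AffineMap.lineMap x y r) = r * f j y := by
    rw [AffineMap.apply_lineMap, hx.1]
    simp [AffineMap.lineMap_apply]
  rcases hyj.lt_or_gt with hyj | hyj
  · exact ⟨⟨_, mem_signCell_insert_pos.2 ⟨apply_j s ▸ mul_pos_of_neg_of_neg hs0 hyj, hs⟩⟩,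
      ⟨_, mem_signCell_insert_neg.2 ⟨apply_j t ▸ mul_neg_of_pos_of_neg ht0 hyj, ht⟩⟩⟩
  · exact ⟨⟨_, mem_signCell_insert_pos.2 ⟨apply_j t ▸ mul_pos ht0 hyj, ht⟩⟩,
      ⟨_, mem_signCell_insert_neg.2 ⟨apply_j s ▸ mul_neg_of_neg_of_pos hs0 hyj, hs⟩⟩⟩

lemma signCell_insert_zero_nonempty
    (hpos : (signCell f Z (insert j P) N).Nonempty)
    (hneg : (signCell f Z P (insert j N)).Nonempty) :
    (signCell f (insert j Z) P N).Nonempty := by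
  obtain ⟨x, hx⟩ := hpos
  obtain ⟨y, hy⟩ := hneg
  rw [mem_signCell_insert_pos] at hx
  rw [mem_signCell_insert_neg] at hy
  have hzero : (0 : ℝ) ∈ f j '' segment ℝ x y := by
    rw [image_segment, segment_eq_uIcc, Set.uIcc_of_ge (hy.1.trans hx.1).le]
    exact ⟨hy.1.le, hx.1.le⟩
  obtain ⟨z, hz, hzj⟩ := hzero
  exact ⟨z, mem_signCell_insert_zero.2
    ⟨hzj, (convex_signCell f Z P N).segment_subset hx.2 hy.2 hz⟩⟩

end SignCell

section Counting

variable {E ι : Type*} [AddCommGroup E] [Module ℝ E]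
variable {f : ι → E →ᵃ[ℝ] ℝ} {I Z P N : Finset ι} {j : ι} {x : E}

lemma IsTransverse.exists_ne_zero (hf : IsTransverse fun i => f i ⁻¹' {0}) (hj : j ∉ Z)
    (hx : x ∈ signCell f Z P N) : ∃ y, (∀ i ∈ Z, f i y = 0) ∧ f j y ≠ 0 := by
  have hne : (⋂ i ∈ Z, f i ⁻¹' {0}).Nonempty := ⟨x, by simpa using hx.1⟩
  simpa [Set.not_subset] using hf Z j hj hne

variable [DecidableEq ι]

lemma IsTransverse.signCell_insert_zero_nonempty_iff (hf : IsTransverse fun i => f i ⁻¹' {0})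
    (hj : j ∉ Z) :
    (signCell f (insert j Z) P N).Nonempty ↔
      (signCell f Z P (insert j N)).Nonempty ∧ (signCell f Z (insert j P) N).Nonempty := by
  refine ⟨fun ⟨x, hx⟩ => ?_, fun h => signCell_insert_zero_nonempty h.2 h.1⟩
  obtain ⟨y, hy, hyj⟩ := hf.exists_ne_zero hj (mem_signCell_insert_zero.1 hx).2
  exact (signCell_insert_pos_neg_nonempty hx hy hyj).symm

lemma IsTransverse.signCell_nonempty_iff (hf : IsTransverse fun i => f i ⁻¹' {0}) (hj : j ∉ Z) :
    (signCell f Z P N).Nonempty ↔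
      (signCell f Z P (insert j N)).Nonempty ∨ (signCell f Z (insert j P) N).Nonempty := by
  constructor
  · rintro ⟨x, hx⟩
    rcases lt_trichotomy (f j x) 0 with hneg | hzero | hpos
    · exact .inl ⟨x, mem_signCell_insert_neg.2 ⟨hneg, hx⟩⟩
    · exact .inl ((hf.signCell_insert_zero_nonempty_iff hj).1
        ⟨x, mem_signCell_insert_zero.2 ⟨hzero, hx⟩⟩).1
    · exact .inr ⟨x, mem_signCell_insert_pos.2 ⟨hpos, hx⟩⟩
  · rintro (⟨x, hx⟩ | ⟨x, hx⟩)
    · exact ⟨x, (mem_signCell_insert_neg.1 hx).2⟩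
    · exact ⟨x, (mem_signCell_insert_pos.1 hx).2⟩

open Classical in
/-- The topes of the arrangement that the hyperplanes `f i = 0`, `i ∈ I`, induce on the flat
`⋂ i ∈ Z, {f i = 0}`. A tope is a region of the arrangement, encoded by the set of those `i ∈ I`
with `f i` positive on it. -/
def topes (f : ι → E →ᵃ[ℝ] ℝ) (I Z : Finset ι) : Finset (Finset ι) :=
  {P ∈ I.powerset | (signCell f Z P (I \ P)).Nonempty}

lemma IsTransverse.card_topes_insert (hf : IsTransverse fun i => f i ⁻¹' {0})
    (hjI : j ∉ I) (hjZ : j ∉ Z) :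
    #(topes f (insert j I) Z) = #(topes f I Z) + #(topes f I (insert j Z)) := by
  classical
  let negSide : Finset (Finset ι) := {P ∈ I.powerset | (signCell f Z P (insert j (I \ P))).Nonempty}
  let posSide : Finset (Finset ι) := {P ∈ I.powerset | (signCell f Z (insert j P) (I \ P)).Nonempty}
  have deletion : topes f I Z = negSide ∪ posSide := by
    rw [← filter_or]
    exact filter_congr fun P _ => hf.signCell_nonempty_iff hjZ
  have restriction : topes f I (insert j Z) = negSide ∩ posSide := by
    rw [← filter_and]
    exact filter_congr fun P _ => hf.signCell_insert_zero_nonempty_iff hjZ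
  rw [deletion, restriction, card_union_add_card_inter, topes, card_filter_powerset_insert hjI]
  congr 2 <;> refine filter_congr fun P hP => ?_
  · rw [insert_sdiff_of_notMem _ fun h => hjI (mem_powerset.1 hP h)]
  · rw [insert_sdiff_insert, sdiff_insert_of_notMem hjI]

open Classical in
theorem IsTransverse.card_topes (hf : IsTransverse fun i => f i ⁻¹' {0}) (hIZ : Disjoint I Z) :
    #(topes f I Z) = #{S ∈ I.powerset | (⋂ i ∈ S ∪ Z, f i ⁻¹' {0}).Nonempty} := by
  induction I using Finset.induction_on generalizing Z with
  | empty => simp [topes, signCell_empty_empty, filter_singleton]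
  | insert j I hjI ih =>
    rw [disjoint_insert_left] at hIZ
    rw [hf.card_topes_insert hjI hIZ.1, card_filter_powerset_insert hjI, ih hIZ.2,
      ih (disjoint_insert_right.2 ⟨hjI, hIZ.2⟩)]
    simp only [union_insert, insert_union]

end Counting

section Regions

variable {E ι : Type*} [AddCommGroup E] [Module ℝ E] [Fintype ι] [DecidableEq ι]
variable {f : ι → E →ᵃ[ℝ] ℝ} {P : Finset ι} {x : E}

lemma mem_topes_univ : P ∈ topes f univ ∅ ↔ (signCell f ∅ P Pᶜ).Nonempty := by
  simp [topes, compl_eq_univ_sdiff]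

lemma mem_signCell_compl_iff :
    x ∈ signCell f ∅ P Pᶜ ↔ x ∈ (⋃ i, f i ⁻¹' {0})ᶜ ∧ P = ({i | 0 < f i x} : Finset ι) := by
  simp only [signCell, Set.mem_ofPred_eq, Set.mem_compl_iff, Set.mem_iUnion, Finset.ext_iff,
    Set.mem_preimage, Set.mem_singleton_iff, mem_compl, mem_filter_univ]
  grind

lemma connectedComponentIn_compl_iUnion [TopologicalSpace E] [ContinuousAdd E]
    [ContinuousSMul ℝ E] (hf : ∀ i, Continuous (f i)) (hx : x ∈ signCell f ∅ P Pᶜ) :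
    connectedComponentIn (⋃ i, f i ⁻¹' {0})ᶜ x = signCell f ∅ P Pᶜ := by
  set U := (⋃ i, f i ⁻¹' {0})ᶜ
  have hxU : x ∈ U := (mem_signCell_compl_iff.1 hx).1
  refine Set.Subset.antisymm (fun y hy => ?_) <|
    (convex_signCell f ∅ P Pᶜ).isPreconnected.subset_connectedComponentIn hx
      fun y hy => (mem_signCell_compl_iff.1 hy).1
  have hno_zero (i : ι) : (0 : ℝ) ∉ f i '' connectedComponentIn U x := by
    rintro ⟨z, hz, hzi⟩
    exact connectedComponentIn_subset U x hz (Set.mem_iUnion.2 ⟨i, hzi⟩)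
  have hord (i : ι) : (f i '' connectedComponentIn U x).OrdConnected :=
    (isPreconnected_connectedComponentIn.image (f i) (hf i).continuousOn).ordConnected
  have hxi (i : ι) := Set.mem_image_of_mem (f i) (mem_connectedComponentIn hxU)
  have hyi (i : ι) := Set.mem_image_of_mem (f i) hy
  refine ⟨by simp, fun i hi => ?_, fun i hi => ?_⟩ <;> by_contra hsign
  · exact hno_zero i ((hord i).out (hyi i) (hxi i) ⟨not_lt.1 hsign, (hx.2.1 i hi).le⟩)
  · exact hno_zero i ((hord i).out (hxi i) (hyi i) ⟨(hx.2.2 i hi).le, not_lt.1 hsign⟩)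

variable {d : ℕ}

lemma regionsOf_iUnion_eq_image_topes (f : ι → EuclideanSpace ℝ (Fin d) →ᵃ[ℝ] ℝ) :
    regionsOf (⋃ i, f i ⁻¹' {0}) = (fun P => signCell f ∅ P Pᶜ) '' (topes f univ ∅) := by
  have hcont (i : ι) : Continuous (f i) := (f i).continuous_of_finiteDimensional
  ext C
  constructor
  · rintro ⟨x, hx, rfl⟩
    have hcell := mem_signCell_compl_iff.2 ⟨hx, rfl⟩
    exact ⟨_, mem_topes_univ.2 ⟨x, hcell⟩, (connectedComponentIn_compl_iUnion hcont hcell).symm⟩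
  · rintro ⟨P, hP, rfl⟩
    obtain ⟨x, hx⟩ : (signCell f ∅ P Pᶜ).Nonempty := mem_topes_univ.1 hP
    exact ⟨x, (mem_signCell_compl_iff.1 hx).1, (connectedComponentIn_compl_iUnion hcont hx).symm⟩

lemma numRegions_iUnion_eq_card_topes (f : ι → EuclideanSpace ℝ (Fin d) →ᵃ[ℝ] ℝ) :
    numRegions (⋃ i, f i ⁻¹' {0}) = #(topes f univ ∅) := by
  suffices hinj : Set.InjOn (fun P => signCell f ∅ P Pᶜ) (topes f univ ∅) by
    rw [numRegions, regionsOf_iUnion_eq_image_topes, hinj.ncard_image, Set.ncard_coe_finset]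
  intro P hP Q _ (hPQ : signCell f ∅ P Pᶜ = signCell f ∅ Q Qᶜ)
  obtain ⟨x, hx⟩ : (signCell f ∅ P Pᶜ).Nonempty := mem_topes_univ.1 hP
  have hxQ : x ∈ signCell f ∅ Q Qᶜ := hPQ ▸ hx
  exact (mem_signCell_compl_iff.1 hx).2.trans (mem_signCell_compl_iff.1 hxQ).2.symm

end Regions

open Classical in
theorem IsTransverse.numRegions_iUnion {d : ℕ} {ι : Type*} [Fintype ι]
    {f : ι → EuclideanSpace ℝ (Fin d) →ᵃ[ℝ] ℝ} (hf : IsTransverse fun i => f i ⁻¹' {0}) :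
    numRegions (⋃ i, f i ⁻¹' {0}) = #{S : Finset ι | (⋂ i ∈ S, f i ⁻¹' {0}).Nonempty} := by
  classical
  rw [numRegions_iUnion_eq_card_topes, hf.card_topes (disjoint_empty_right _)]
  simp only [powerset_univ, union_empty]

namespace IsGPPH

variable {d n : ℕ} {κ : Type} [Fintype κ] {g : κ → Fin n} {k : Fin n → ℕ}
  {H : κ → Set (EuclideanSpace ℝ (Fin d))}

lemma exists_eq_preimage_zero (h : IsGPPH d n g k H) (i : κ) :
    ∃ f : EuclideanSpace ℝ (Fin d) →ᵃ[ℝ] ℝ, H i = f ⁻¹' {0} := by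
  obtain ⟨w, -, hw⟩ := h.2.1 (g i)
  obtain ⟨c, hc⟩ := hw i rfl
  refine ⟨(innerₛₗ ℝ w).toAffineMap - AffineMap.const ℝ _ c, ?_⟩
  ext x
  simp [hc, sub_eq_zero, PiLp.inner_apply, mul_comm]

lemma disjoint (h : IsGPPH d n g k H) {i j : κ} (hij : i ≠ j) (hg : g i = g j) :
    Disjoint (H i) (H j) := by
  obtain ⟨w, -, hw⟩ := h.2.1 (g j)
  obtain ⟨a, ha⟩ := hw i hg
  obtain ⟨b, hb⟩ := hw j rfl
  have hne : H i ≠ H j := h.2.2.1 i j hij hg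
  refine Set.disjoint_left.2 fun x hxi hxj => hne ?_
  rw [ha] at hxi
  rw [hb] at hxj
  rw [ha, hb, ← hxi.symm.trans hxj]

lemma iInter_nonempty_iff (h : IsGPPH d n g k H) (S : Finset κ) :
    (⋂ i ∈ S, H i).Nonempty ↔ Set.InjOn g S ∧ #S ≤ d := by
  constructor
  · rintro ⟨x, hx⟩
    have hmem (i : κ) (hi : i ∈ S) : x ∈ H i := Set.mem_iInter₂.1 hx i hi
    have hinj : Set.InjOn g S := fun i hi j hj hg => by_contra fun hij =>
      Set.disjoint_left.1 (h.disjoint hij hg) (hmem i hi) (hmem j hj)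
    refine ⟨hinj, not_lt.1 fun hd => ?_⟩
    rwa [(h.2.2.2 S hinj).2 hd] at hx
  · rintro ⟨hinj, hd⟩
    obtain ⟨-, -, hne, -⟩ := (h.2.2.2 S hinj).1 hd
    exact hne

lemma isTransverse (h : IsGPPH d n g k H) : IsTransverse H := by
  classical
  intro S j hj hS hsub
  have hinsert : ⋂ i ∈ insert j S, H i = ⋂ i ∈ S, H i := by
    rw [set_biInter_insert, Set.inter_eq_right.2 hsub]
  obtain ⟨hinj, hd⟩ := (h.iInter_nonempty_iff S).1 hS
  obtain ⟨hinj', hd'⟩ := (h.iInter_nonempty_iff (insert j S)).1 (hinsert ▸ hS)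
  obtain ⟨A, hA, -, hAdim⟩ := (h.2.2.2 S hinj).1 hd
  obtain ⟨B, hB, -, hBdim⟩ := (h.2.2.2 (insert j S) hinj').1 hd'
  obtain rfl : A = B := SetLike.coe_injective (by rw [hA, hB, hinsert])
  rw [card_insert_of_notMem hj] at hBdim hd'
  omega

open Classical in
theorem numRegions_iUnion (h : IsGPPH d n g k H) :
    numRegions (⋃ i, H i) = #{S : Finset κ | Set.InjOn g S ∧ #S ≤ d} := by
  simp only [← h.iInter_nonempty_iff]
  choose f hf using h.exists_eq_preimage_zero
  obtain rfl : H = fun i => f i ⁻¹' {0} := funext hf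
  exact h.isTransverse.numRegions_iUnion

lemma comp_injective (h : IsGPPH d n g k H) {σ : Type} [Fintype σ] {e : σ → κ}
    (he : Function.Injective e) :
    IsGPPH d n (g ∘ e) (fun l => #{i | (g ∘ e) i = l}) (H ∘ e) := by
  obtain ⟨-, hparallel, hdistinct, hgeneral⟩ := h
  refine ⟨fun l => by congr, fun l => ?_, fun i j hij hg => hdistinct _ _ (he.ne hij) hg,
    fun S hS => ?_⟩
  · obtain ⟨w, hw0, hw⟩ := hparallel l
    exact ⟨w, hw0, fun i hi => hw (e i) hi⟩
  · have hinj : Set.InjOn g (S.map ⟨e, he⟩ : Finset κ) := by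
      rw [coe_map]
      exact hS.image_of_comp
    simpa using hgeneral _ hinj

end IsGPPH

/-- If `ℋ ∈ Λ_d((k_1,…,k_n))` and `G₁, G₂` are two further hyperplanes,
parallel to the `n`-th group of `ℋ`, such that `ℋ ∪ {G₁, G₂} ∈ Λ_d((k_1,…,k_n + 2))`
(encoded by `hExt`: the extended family, indexed by `ι ⊕ Fin 2` with the two new hyperplanes
joining the last group, is gp/ph with the last group size increased by `2`), then
`ℋ ∪ {G₁}` and `ℋ ∪ {G₂}` have the same number of regions. -/
theorem numRegions_union_eq_of_parallel {d n : ℕ} (hd : 1 ≤ d) (hn : 1 ≤ n)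
    (k : Fin n → ℕ) (hk : ∀ l, 1 ≤ k l)
    {ι : Type} [Fintype ι] (g : ι → Fin n) (H : ι → Set (EuclideanSpace ℝ (Fin d)))
    (G₁ G₂ : Set (EuclideanSpace ℝ (Fin d)))
    (hGP : IsGPPH d n g k H)
    (hExt : IsGPPH d n (Sum.elim g fun _ : Fin 2 => (⟨n - 1, by omega⟩ : Fin n))
      (fun l => if l = (⟨n - 1, by omega⟩ : Fin n) then k l + 2 else k l)
      (Sum.elim H ![G₁, G₂])) :
    numRegions ((⋃ i, H i) ∪ G₁) = numRegions ((⋃ i, H i) ∪ G₂) := by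
  classical
  have hsubfamily (b : Fin 2) := hExt.comp_injective (σ := ι ⊕ Unit)
    (e := Sum.map id fun _ => b) (Function.injective_id.sumMap fun _ _ _ => rfl)
  have hunion (b : Fin 2) : (⋃ i, H i) ∪ ![G₁, G₂] b =
      ⋃ i : ι ⊕ Unit, (Sum.elim H ![G₁, G₂] ∘ Sum.map id fun _ => b) i := by
    simp [Set.iUnion_sum, Set.iUnion_const]
  have hcount (b : Fin 2) : numRegions ((⋃ i, H i) ∪ ![G₁, G₂] b) =
      #{S : Finset (ι ⊕ Unit) |
        Set.InjOn (Sum.elim g fun _ : Unit => (⟨n - 1, by omega⟩ : Fin n)) S ∧ #S ≤ d} := by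
    rw [hunion, (hsubfamily b).numRegions_iUnion, Sum.elim_comp_map]
    rfl
  exact (hcount 0).trans (hcount 1).symm

end
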